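/- Let X = X_{a,b} be the Bourgain–Delbaen space and Q : ℓ∞^* → X^* the restriction map. Then every weak*-limit point x^* of the sequence (Q e_k^*)_{k∈ℕ} in X^* is the sum of a norm-absolutely convergent series x^* = Σ_{j=1}^∞ c_j Q((I − P_{m_j})^* e_{r_j}^*) for some reals c_j with |c_j| ≤ a^{j−1}, some m_j ∈ ℕ ∪ {0} (with P₀ = 0) and some r_j ∈ ℕ. Consequently every such limit point belongs to the closed linear span of {Q e_j^* : j ∈ ℕ}. -/

import Mathlib

open MeasureTheory Set Ordinal Filter
open scoped Classical

/-- `ℓ∞ = ℓ∞(ℕ)`. -/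
noncomputable abbrev linf : Type := lp (fun _ : ℕ => ℝ) ⊤

/-- The `k`-th coordinate functional `e_k^*` on `ℓ∞`. -/
noncomputable def coordFn (k : ℕ) : linf →L[ℝ] ℝ :=
  LinearMap.mkContinuous
    { toFun := fun x => x k
      map_add' := fun _ _ => rfl
      map_smul' := fun _ _ => rfl }
    1 (fun x => by
      rw [one_mul]
      exact lp.norm_apply_le_norm (E := fun _ : ℕ => ℝ) ENNReal.top_ne_zero x k)

/-- The `k`-th coordinate vector `e_k` of `ℓ∞`. -/
noncomputable def ek (k : ℕ) : linf := lp.single ⊤ k (1 : ℝ)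

/-- `E_n = span{e_k : 1 ≤ k ≤ d n}`. -/
noncomputable def Esub (d : ℕ → ℕ) (n : ℕ) : Submodule ℝ linf :=
  Submodule.span ℝ {x : linf | ∃ k : ℕ, 1 ≤ k ∧ k ≤ d n ∧ x = ek k}

/-- All the data of the Bourgain–Delbaen construction: the constants `a`, `b`, `λ`, the
dimensions `d n`, the enumeration `φ` of tuples `(σ',i,m,σ'',j)`, the coordinate projections
`π_m`, the embeddings `i_{m,n}` and the limit projections `P_m`, together with their defining
properties. -/
structure BDSetup where
  a : ℝ
  b : ℝ
  lam : ℝ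
  hb : 0 < b
  hba : b < a
  ha : a < 1
  hlam : 1 < lam
  hineq : a + 2 * b * lam < lam
  /-- the dimensions -/
  d : ℕ → ℕ
  hd1 : d 1 = 1
  hd2 : d 2 = 2
  /-- the enumeration of the tuples `(σ', i, m, σ'', j)` -/
  φ : ℕ → ℤ × ℕ × ℕ × ℤ × ℕ
  hφ : ∀ n : ℕ, 2 ≤ n → Set.BijOn φ {k : ℕ | d n < k ∧ k ≤ d (n + 1)}
      {q : ℤ × ℕ × ℕ × ℤ × ℕ | (q.1 = 1 ∨ q.1 = -1) ∧ (q.2.2.2.1 = 1 ∨ q.2.2.2.1 = -1) ∧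
        1 ≤ q.2.2.1 ∧ q.2.2.1 < n ∧ 1 ≤ q.2.1 ∧ q.2.1 ≤ d q.2.2.1 ∧
        1 ≤ q.2.2.2.2 ∧ q.2.2.2.2 ≤ d n}
  /-- the coordinate projections `π_m` -/
  pi : ℕ → (linf →L[ℝ] linf)
  hpi : ∀ (m : ℕ) (x : linf) (k : ℕ), pi m x k = if 1 ≤ k ∧ k ≤ d m then x k else 0
  /-- the embeddings `i_{m,n}` -/
  iMap : ℕ → ℕ → (linf →L[ℝ] linf)
  hi12 : ∀ x : linf, x ∈ Esub d 1 → iMap 1 2 x = x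
  histep : ∀ n : ℕ, 2 ≤ n → ∀ x : linf, x ∈ Esub d n →
    iMap n (n + 1) x = x + ∑ k ∈ Finset.Ioc (d n) (d (n + 1)),
      (a * ((φ k).1 : ℝ) * x (φ k).2.1 +
        b * (((φ k).2.2.2.1 : ℤ) : ℝ) *
          ((x - iMap (φ k).2.2.1 n (pi (φ k).2.2.1 x)) (φ k).2.2.2.2)) • ek k
  hicomp : ∀ m n : ℕ, 1 ≤ m → m < n → ∀ x : linf, x ∈ Esub d m →
    iMap m (n + 1) x = iMap n (n + 1) (iMap m n x)
  hinorm : ∀ m n : ℕ, 1 ≤ m → m < n → ∀ x : linf, x ∈ Esub d m → ‖iMap m n x‖ ≤ lam * ‖x‖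
  /-- the coordinatewise limit projections `P_m` -/
  P : ℕ → (linf →L[ℝ] linf)
  hP0 : P 0 = 0
  hPlim : ∀ m : ℕ, 1 ≤ m → ∀ (x : linf) (k : ℕ),
    Filter.Tendsto (fun n => (iMap m n (pi m x)) k) Filter.atTop (nhds (P m x k))
  hPproj : ∀ m : ℕ, (P m).comp (P m) = P m
  hPnorm : ∀ m : ℕ, ‖P m‖ ≤ lam

/-- The Bourgain–Delbaen space `X = X_{a,b}`, the closed linear span of `⋃ m, P_m(E_m)`. -/
noncomputable def Xsub (S : BDSetup) : Submodule ℝ linf :=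
  (Submodule.span ℝ (⋃ m ∈ {m : ℕ | 1 ≤ m}, (S.P m) '' (Esub S.d m))).topologicalClosure

/-- The restriction (quotient) map `Q : ℓ∞^* → X^*`. -/
noncomputable def QMap (S : BDSetup) (f : linf →L[ℝ] ℝ) : (Xsub S) →L[ℝ] ℝ :=
  f.comp (Xsub S).subtypeL

/-- The images `Q e_k^*` of the coordinate functionals in `X^*`. -/
noncomputable def Qe (S : BDSetup) (k : ℕ) : (Xsub S) →L[ℝ] ℝ := QMap S (coordFn k)

/-!
Let `n` be the level of `k`, that is, `d n < k ≤ d (n + 1)`. The recursive definition of the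
embeddings reads, on `X`,
`Q e_k^* = a σ' Q e_i^* + b σ'' Q((I - P_m)^* e_j^*) + Q((I - P_n)^* e_k^*)`
with `φ k = (σ', i, m, σ'', j)`, and the last term tends weak* to `0` as `k → ∞`. Take the limit
along an ultrafilter. If it is principal, the limit is some `Q e_r^*`. Otherwise, if `m` is constant
along it, so is `i` because `i ≤ d m`, and the limit is a multiple of one `Q e_r^*` plus a multiple
of `(I - P_m)^*` of a new limit functional. If `m → ∞`, the `b`-term disappears as well and a
multiple of a new limit functional is left. As `b < a`, each step costs a factor
at most `a`, so iterating it, with `(I - P_m) (I - P_n) = I - P_{max m n}`, expands a limit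
functional into a geometrically convergent series.
-/

section UltrafilterLimits

open Topology

lemma tendsto_atTop_or_eventually_eq_const {α : Type*} (U : Ultrafilter α) (f : α → ℕ) :
    Tendsto f U atTop ∨ ∃ n, ∀ᶠ k in U, f k = n := by
  rcases (U.map f).le_cofinite_or_eq_pure with h | ⟨n, h⟩
  · exact .inl (Nat.cofinite_eq_atTop ▸ h)
  · exact .inr ⟨n, show {n} ∈ U.map f from h ▸ mem_singleton n⟩

lemma exists_tendsto_of_norm_le {α E : Type*} [SeminormedAddCommGroup E] [ProperSpace E]
    (U : Ultrafilter α) {f : α → E} {C : ℝ} (hf : ∀ᶠ k in U, ‖f k‖ ≤ C) :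
    ∃ y, ‖y‖ ≤ C ∧ Tendsto f U (𝓝 y) := by
  obtain ⟨y, hy, hlim⟩ := (isCompact_closedBall (0 : E) C).ultrafilter_le_nhds (U.map f)
    (le_principal_iff.2 (hf.mono fun k hk => mem_closedBall_zero_iff.2 hk))
  exact ⟨y, mem_closedBall_zero_iff.1 hy, hlim⟩

lemma exists_tendsto_apply_of_norm_le {α 𝕜 E : Type*} [NontriviallyNormedField 𝕜]
    [ProperSpace 𝕜] [SeminormedAddCommGroup E] [NormedSpace 𝕜 E] (U : Ultrafilter α)
    {f : α → E →L[𝕜] 𝕜} {C : ℝ} (hf : ∀ k, ‖f k‖ ≤ C) :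
    ∃ y : E →L[𝕜] 𝕜, ‖y‖ ≤ C ∧ ∀ x, Tendsto (fun k => f k x) U (𝓝 (y x)) := by
  obtain ⟨y, hy, hlim⟩ := (WeakDual.isCompact_closedBall (𝕜 := 𝕜) (E := E) 0 C).ultrafilter_le_nhds
    (U.map fun k => StrongDual.toWeakDual (f k))
    (le_principal_iff.2 (Eventually.of_forall (f := (U : Filter α))
      fun k => mem_closedBall_zero_iff.2 (hf k)))
  exact ⟨WeakDual.toStrongDual y, mem_closedBall_zero_iff.1 hy,
    tendsto_iff_forall_eval_tendsto_topDualPairing.1 hlim⟩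

lemma mapClusterPt_pi_of_frequently {ι α E : Type*} [PseudoMetricSpace E] {l : Filter ι}
    {F : ι → α → E} {y : α → E}
    (h : ∀ (s : Finset α) (δ : ℝ), 0 < δ → ∃ᶠ k in l, ∀ x ∈ s, dist (F k x) (y x) < δ) :
    MapClusterPt y l F := by
  have hbasis : (𝓝 y).HasBasis (fun Iδ : Set α × ℝ => Iδ.1.Finite ∧ 0 < Iδ.2)
      fun Iδ => Iδ.1.pi fun x => Metric.ball (y x) Iδ.2 := by
    rw [nhds_pi]
    refine hasBasis_pi_same_index (fun _ => Metric.nhds_basis_ball) fun I δ hI hδ => ?_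
    obtain ⟨δ₀, hδ₀, hle⟩ := ((eventually_all_finite hI).2 fun i hi =>
      Ioo_mem_nhdsGT (hδ i hi)).and self_mem_nhdsWithin |>.exists
    exact ⟨δ₀, hle, fun i hi => Metric.ball_subset_ball (hδ₀ i hi).2.le⟩
  rw [mapClusterPt_iff_frequently]
  intro V hV
  obtain ⟨⟨I, δ⟩, ⟨hI, hδ⟩, hIV⟩ := hbasis.mem_iff.1 hV
  exact (h hI.toFinset δ hδ).mono fun k hk => hIV fun x hx => hk x (hI.mem_toFinset.2 hx)

end UltrafilterLimits

section NormedSpaces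

open Topology

lemma tendsto_apply_of_mem_topologicalClosure_span {ι 𝕜 E F : Type*} [NontriviallyNormedField 𝕜]
    [SeminormedAddCommGroup E] [NormedSpace 𝕜 E] [SeminormedAddCommGroup F] [NormedSpace 𝕜 F]
    {T : ι → E →L[𝕜] F} {T₀ : E →L[𝕜] F} {C : ℝ} (hT : ∀ i, ‖T i‖ ≤ C) {l : Filter ι} {s : Set E}
    (hs : ∀ x ∈ s, Tendsto (fun i => T i x) l (𝓝 (T₀ x))) {x : E}
    (hx : x ∈ (Submodule.span 𝕜 s).topologicalClosure) :
    Tendsto (fun i => T i x) l (𝓝 (T₀ x)) := by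
  have hequi : Equicontinuous fun i => (T i : E → F) :=
    ((NormedSpace.equicontinuous_TFAE T).out 1 5 :).2 ⟨C, hT⟩
  refine (hequi x).tendsto_of_mem_closure T₀.continuous.continuousWithinAt (fun y hy => ?_) hx
  induction hy using Submodule.span_induction with
  | mem y hy => exact hs y hy
  | zero => simpa only [map_zero] using tendsto_const_nhds
  | add y z _ _ hy hz => simpa only [map_add] using hy.add hz
  | smul c y _ hy => simpa only [map_smul] using hy.const_smul c

lemma hasSum_sub_succ_of_summable_norm {E : Type*} [SeminormedAddCommGroup E] {R : ℕ → E}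
    (hR : Summable fun j => ‖R j‖) :
    Summable (fun j => ‖R j - R (j + 1)‖) ∧ HasSum (fun j => R j - R (j + 1)) (R 0) := by
  have hdiff : Summable fun j => ‖R j - R (j + 1)‖ :=
    .of_nonneg_of_le (fun _ => norm_nonneg _) (fun _ => norm_sub_le _ _)
      (hR.add ((summable_nat_add_iff 1).2 hR))
  refine ⟨hdiff, (hasSum_iff_tendsto_nat_of_summable_norm hdiff).2 ?_⟩
  simp only [Finset.sum_range_sub']
  simpa only [_root_.sub_zero] using
    (tendsto_zero_iff_norm_tendsto_zero.2 hR.tendsto_atTop_zero).const_sub (R 0)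

end NormedSpaces

lemma norm_coordFn_le (k : ℕ) : ‖coordFn k‖ ≤ 1 :=
  LinearMap.mkContinuous_norm_le _ zero_le_one _

lemma ek_apply (k i : ℕ) : ek k i = if i = k then 1 else 0 := by
  rw [ek, lp.single_apply, Pi.single_apply]

lemma sum_smul_ek_apply (s : Finset ℕ) (f : ℕ → ℝ) (i : ℕ) :
    (∑ k ∈ s, f k • ek k : linf) i = if i ∈ s then f i else 0 := by
  change coordFn i (∑ k ∈ s, f k • ek k) = _
  have hek : ∀ k, coordFn i (ek k) = if i = k then 1 else 0 := fun k => ek_apply k i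
  simp [hek]

lemma sum_smul_ek_mem_Esub {d : ℕ → ℕ} {n : ℕ} {s : Finset ℕ} (hs : s ⊆ Finset.Icc 1 (d n))
    (f : ℕ → ℝ) : ∑ k ∈ s, f k • ek k ∈ Esub d n :=
  Submodule.sum_mem _ fun k hk => Submodule.smul_mem _ _ <| Submodule.subset_span
    ⟨k, (Finset.mem_Icc.1 (hs hk)).1, (Finset.mem_Icc.1 (hs hk)).2, rfl⟩

namespace BDSetup

open Topology

variable (S : BDSetup)

section CoordinateProjections

lemma pi_eq_sum (n : ℕ) (x : linf) : S.pi n x = ∑ k ∈ Finset.Icc 1 (S.d n), x k • ek k := by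
  ext i
  simp only [S.hpi, sum_smul_ek_apply, Finset.mem_Icc]

lemma pi_mem_Esub (n : ℕ) (x : linf) : S.pi n x ∈ Esub S.d n :=
  S.pi_eq_sum n x ▸ sum_smul_ek_mem_Esub subset_rfl _

variable {S}

lemma pi_eq_self_of_mem_Esub {n : ℕ} {x : linf} (hx : x ∈ Esub S.d n) : S.pi n x = x := by
  suffices Esub S.d n ≤ LinearMap.eqLocus (S.pi n).toLinearMap LinearMap.id from this hx
  refine Submodule.span_le.2 ?_
  rintro _ ⟨k, hk₁, hk, rfl⟩
  ext i
  change S.pi n (ek k) i = ek k i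
  rw [S.hpi, ek_apply]
  grind

lemma apply_eq_zero_of_mem_Esub {n : ℕ} {x : linf} (hx : x ∈ Esub S.d n) {k : ℕ}
    (hk : S.d n < k) : x k = 0 := by
  rw [← pi_eq_self_of_mem_Esub hx, S.hpi, if_neg fun h => h.2.not_gt hk]

lemma pi_congr {n : ℕ} {x y : linf} (h : ∀ k ∈ Finset.Icc 1 (S.d n), x k = y k) :
    S.pi n x = S.pi n y := by
  rw [pi_eq_sum, pi_eq_sum]
  exact Finset.sum_congr rfl fun k hk => by rw [h k hk]

end CoordinateProjections

section Levels

lemma strictMonoOn_d : StrictMonoOn S.d (Ici 1) := by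
  have hstep : ∀ n, 1 ≤ n → 1 ≤ S.d n ∧ S.d n < S.d (n + 1) := fun n hn => by
    induction n, hn using Nat.le_induction with
    | base => rw [S.hd1, S.hd2]; decide
    | succ n hn ih =>
      have hpos : 1 ≤ S.d (n + 1) := ih.1.trans ih.2.le
      obtain ⟨k, hk, -⟩ := (S.hφ (n + 1) (by omega)).surjOn
        (show (1, 1, 1, 1, 1) ∈ _ from
          ⟨.inl rfl, .inl rfl, le_rfl, Nat.lt_succ_of_le hn, le_rfl, S.hd1.ge, le_rfl, hpos⟩)
      exact ⟨hpos, hk.1.trans_le hk.2⟩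
  exact strictMonoOn_of_lt_add_one ordConnected_Ici fun n _ hn _ => (hstep n hn).2

variable {S}

lemma d_le_d {m n : ℕ} (hm : 1 ≤ m) (h : m ≤ n) : S.d m ≤ S.d n :=
  S.strictMonoOn_d.monotoneOn hm (hm.trans h) h

variable (S)

lemma le_d_succ (n : ℕ) : n ≤ S.d (n + 1) :=
  StrictMono.le_apply (f := fun n => S.d (n + 1)) fun _ _ h =>
    S.strictMonoOn_d (Nat.le_add_left 1 _) (Nat.le_add_left 1 _) (Nat.succ_lt_succ h)

/-- For `k > 2`, the index `n` of the block `d n < k ≤ d (n + 1)` of coordinates which contains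
`k`; for `k ≤ 2` it carries no meaning. -/
noncomputable def level (k : ℕ) : ℕ := sInf {n | k ≤ S.d (n + 1)}

lemma le_d_level_succ (k : ℕ) : k ≤ S.d (S.level k + 1) :=
  Nat.sInf_mem (s := {n | k ≤ S.d (n + 1)}) ⟨k, S.le_d_succ k⟩

variable {S}

lemma two_le_level {k : ℕ} (hk : 2 < k) : 2 ≤ S.level k := by
  by_contra! hlt
  have hle : S.d (S.level k + 1) ≤ S.d 2 := d_le_d (Nat.le_add_left 1 _) (Nat.succ_le_of_lt hlt)
  have := S.le_d_level_succ k
  rw [S.hd2] at hle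
  omega

lemma d_level_lt {k : ℕ} (hk : 2 < k) : S.d (S.level k) < k := by
  have hlevel := two_le_level (S := S) hk
  have hmin : S.level k - 1 ∉ {n | k ≤ S.d (n + 1)} :=
    Nat.notMem_of_lt_sInf (Nat.sub_lt (by omega) one_pos)
  rwa [mem_ofPred_eq, not_le, Nat.sub_add_cancel (by omega)] at hmin

variable (S)

lemma tendsto_level_atTop : Tendsto S.level atTop atTop := by
  refine tendsto_atTop_atTop.2 fun N => ⟨S.d N + 1, fun k hk => ?_⟩
  by_contra! hlt
  have hle : S.d (S.level k + 1) ≤ S.d N := d_le_d (Nat.le_add_left 1 _) hlt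
  have := S.le_d_level_succ k
  omega

end Levels

section Tuples

/-- The coefficient `a σ'` of the coordinate `k`, where `φ k = (σ', i, m, σ'', j)`. -/
noncomputable def fstCoeff (k : ℕ) : ℝ := S.a * ((S.φ k).1 : ℝ)

/-- The index `i` of the coordinate `k`, where `φ k = (σ', i, m, σ'', j)`. -/
def fstIdx (k : ℕ) : ℕ := (S.φ k).2.1

/-- The index `m` of the projection in the coordinate `k`, where `φ k = (σ', i, m, σ'', j)`. -/
def cut (k : ℕ) : ℕ := (S.φ k).2.2.1

/-- The coefficient `b σ''` of the coordinate `k`, where `φ k = (σ', i, m, σ'', j)`. -/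
noncomputable def sndCoeff (k : ℕ) : ℝ := S.b * ((S.φ k).2.2.2.1 : ℝ)

/-- The index `j` of the coordinate `k`, where `φ k = (σ', i, m, σ'', j)`. -/
def sndIdx (k : ℕ) : ℕ := (S.φ k).2.2.2.2

lemma a_pos : 0 < S.a := S.hb.trans S.hba

variable {S} {k : ℕ}

lemma abs_fstCoeff (hk : 2 < k) : |S.fstCoeff k| = S.a := by
  rcases ((S.hφ _ (two_le_level hk)).mapsTo ⟨d_level_lt hk, S.le_d_level_succ k⟩).1 with h | h <;>
    simp [fstCoeff, h, S.a_pos.le]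

lemma abs_sndCoeff (hk : 2 < k) : |S.sndCoeff k| = S.b := by
  rcases ((S.hφ _ (two_le_level hk)).mapsTo ⟨d_level_lt hk, S.le_d_level_succ k⟩).2.1 with h | h <;>
    simp [sndCoeff, h, S.hb.le]

lemma cut_mem_Ico (hk : 2 < k) : S.cut k ∈ Finset.Ico 1 (S.level k) :=
  let ⟨_, _, h₁, h₂, _⟩ := (S.hφ _ (two_le_level hk)).mapsTo ⟨d_level_lt hk, S.le_d_level_succ k⟩
  Finset.mem_Ico.2 ⟨h₁, h₂⟩

lemma fstIdx_mem_Icc (hk : 2 < k) : S.fstIdx k ∈ Finset.Icc 1 (S.d (S.cut k)) :=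
  let ⟨_, _, _, _, h₁, h₂, _⟩ :=
    (S.hφ _ (two_le_level hk)).mapsTo ⟨d_level_lt hk, S.le_d_level_succ k⟩
  Finset.mem_Icc.2 ⟨h₁, h₂⟩

lemma sndIdx_mem_Icc (hk : 2 < k) : S.sndIdx k ∈ Finset.Icc 1 (S.d (S.level k)) :=
  let ⟨_, _, _, _, _, _, h⟩ :=
    (S.hφ _ (two_le_level hk)).mapsTo ⟨d_level_lt hk, S.le_d_level_succ k⟩
  Finset.mem_Icc.2 h

end Tuples

section Embeddings

variable {S} {m n : ℕ} {x : linf}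

lemma exists_iMap_succ_eq_add_sum (hn : 1 ≤ n) (hx : x ∈ Esub S.d n) :
    ∃ f : ℕ → ℝ, S.iMap n (n + 1) x = x + ∑ k ∈ Finset.Ioc (S.d n) (S.d (n + 1)), f k • ek k := by
  obtain rfl | h := hn.eq_or_lt
  · exact ⟨0, by simp [S.hi12 x hx]⟩
  · exact ⟨_, S.histep n h x hx⟩

lemma Esub_le_succ (hn : 1 ≤ n) : Esub S.d n ≤ Esub S.d (n + 1) :=
  Submodule.span_mono fun _ ⟨k, hk₁, hk, hx⟩ => ⟨k, hk₁, hk.trans (d_le_d hn n.le_succ), hx⟩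

lemma iMap_succ_mem_Esub (hn : 1 ≤ n) (hx : x ∈ Esub S.d n) :
    S.iMap n (n + 1) x ∈ Esub S.d (n + 1) := by
  obtain ⟨f, hf⟩ := exists_iMap_succ_eq_add_sum hn hx
  rw [hf]
  refine Submodule.add_mem _ (Esub_le_succ hn hx) (sum_smul_ek_mem_Esub (fun k hk => ?_) f)
  rw [Finset.mem_Ioc] at hk
  exact Finset.mem_Icc.2 ⟨by omega, hk.2⟩

lemma iMap_succ_apply_of_le (hn : 1 ≤ n) (hx : x ∈ Esub S.d n) {k : ℕ} (hk : k ≤ S.d n) :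
    S.iMap n (n + 1) x k = x k := by
  obtain ⟨f, hf⟩ := exists_iMap_succ_eq_add_sum hn hx
  rw [hf, lp.coeFn_add, Pi.add_apply, sum_smul_ek_apply,
    if_neg fun h => (Finset.mem_Ioc.1 h).1.not_ge hk, add_zero]

lemma iMap_level_succ_apply {k : ℕ} (hk : 2 < k) (hx : x ∈ Esub S.d (S.level k)) :
    S.iMap (S.level k) (S.level k + 1) x k = S.fstCoeff k * x (S.fstIdx k) +
      S.sndCoeff k * (x - S.iMap (S.cut k) (S.level k) (S.pi (S.cut k) x)) (S.sndIdx k) := by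
  rw [S.histep _ (two_le_level hk) x hx, lp.coeFn_add, Pi.add_apply, sum_smul_ek_apply,
    if_pos (Finset.mem_Ioc.2 ⟨d_level_lt hk, S.le_d_level_succ k⟩),
    apply_eq_zero_of_mem_Esub hx (d_level_lt hk), zero_add]
  rfl

lemma iMap_mem_Esub (hm : 1 ≤ m) (hmn : m < n) (hx : x ∈ Esub S.d m) :
    S.iMap m n x ∈ Esub S.d n := by
  induction n, Nat.succ_le_of_lt hmn using Nat.le_induction with
  | base => exact iMap_succ_mem_Esub hm hx
  | succ n hn ih =>
    rw [S.hicomp m n hm hn x hx]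
    exact iMap_succ_mem_Esub (by omega) (ih hn)

lemma iMap_apply_of_le (hm : 1 ≤ m) (hmn : m < n) {N : ℕ} (hN : n ≤ N) (hx : x ∈ Esub S.d m)
    {k : ℕ} (hk : k ≤ S.d n) : S.iMap m N x k = S.iMap m n x k := by
  induction N, hN using Nat.le_induction with
  | base => rfl
  | succ N hN ih =>
    rw [S.hicomp m N hm (by omega) x hx, iMap_succ_apply_of_le (by omega)
      (iMap_mem_Esub hm (by omega) hx) (hk.trans (d_le_d (by omega) hN)), ih]

lemma iMap_iMap (hm : 1 ≤ m) (hmn : m < n) {N : ℕ} (hN : n < N) (hx : x ∈ Esub S.d m) :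
    S.iMap n N (S.iMap m n x) = S.iMap m N x := by
  have hmem := iMap_mem_Esub hm hmn hx
  induction N, Nat.succ_le_of_lt hN using Nat.le_induction with
  | base => exact (S.hicomp m n hm hmn x hx).symm
  | succ N hN' ih =>
    rw [S.hicomp m N hm (by omega) x hx, ← ih hN', S.hicomp n N (by omega) hN' _ hmem]

end Embeddings

section Projections

variable {S} {m n : ℕ}

lemma P_apply_eq_iMap (hm : 1 ≤ m) (hmn : m < n) (x : linf) {k : ℕ} (hk : k ≤ S.d n) :
    S.P m x k = S.iMap m n (S.pi m x) k := by
  refine tendsto_nhds_unique (S.hPlim m hm x k) (tendsto_const_nhds.congr' ?_)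
  filter_upwards [eventually_ge_atTop n] with N hN
  exact (iMap_apply_of_le hm hmn hN (S.pi_mem_Esub m x) hk).symm

lemma P_apply_of_mem_Icc (hm : 1 ≤ m) (x : linf) {k : ℕ} (hk : k ∈ Finset.Icc 1 (S.d m)) :
    S.P m x k = x k := by
  rw [Finset.mem_Icc] at hk
  rw [P_apply_eq_iMap hm m.lt_succ_self x (hk.2.trans (d_le_d hm m.le_succ)),
    iMap_succ_apply_of_le hm (S.pi_mem_Esub m x) hk.2, S.hpi, if_pos hk]

lemma P_congr (hm : 1 ≤ m) {x y : linf} (h : S.pi m x = S.pi m y) : S.P m x = S.P m y := by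
  ext k
  exact tendsto_nhds_unique (h ▸ S.hPlim m hm x k) (S.hPlim m hm y k)

lemma P_pi (hm : 1 ≤ m) (x : linf) : S.P m (S.pi m x) = S.P m x :=
  P_congr hm (pi_eq_self_of_mem_Esub (S.pi_mem_Esub m x))

lemma P_P_of_le (h : m ≤ n) (x : linf) : S.P m (S.P n x) = S.P m x := by
  obtain rfl | hm := m.eq_zero_or_pos
  · simp [S.hP0]
  · exact P_congr hm <| pi_congr fun k hk => P_apply_of_mem_Icc (hm.trans_le h) x
      (Finset.Icc_subset_Icc_right (d_le_d hm h) hk)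

lemma pi_P_of_lt (hm : 1 ≤ m) (h : m < n) (x : linf) :
    S.pi n (S.P m x) = S.iMap m n (S.pi m x) := by
  rw [← pi_eq_self_of_mem_Esub (iMap_mem_Esub hm h (S.pi_mem_Esub m x))]
  exact pi_congr fun k hk => P_apply_eq_iMap hm h x (Finset.mem_Icc.1 hk).2

lemma P_P_of_ge (h : m ≤ n) (x : linf) : S.P n (S.P m x) = S.P m x := by
  obtain rfl | hm := m.eq_zero_or_pos
  · simp [S.hP0]
  obtain rfl | hlt := h.eq_or_lt
  · exact DFunLike.congr_fun (S.hPproj m) x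
  ext k
  refine tendsto_nhds_unique (S.hPlim n (by omega) _ k) ((S.hPlim m hm x k).congr' ?_)
  filter_upwards [eventually_gt_atTop n] with N hN
  rw [pi_P_of_lt hm hlt, iMap_iMap hm hlt hN (S.pi_mem_Esub m x)]

lemma P_level_apply {k : ℕ} (hk : 2 < k) (x : linf) :
    S.P (S.level k) x k = S.fstCoeff k * x (S.fstIdx k) +
      S.sndCoeff k * (x - S.P (S.cut k) x) (S.sndIdx k) := by
  have hlevel : 1 ≤ S.level k := one_le_two.trans (two_le_level hk)
  obtain ⟨hcut, hcut_lt⟩ := Finset.mem_Ico.1 (cut_mem_Ico (S := S) hk)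
  have hpi_of_mem : ∀ i ∈ Finset.Icc 1 (S.d (S.level k)), S.pi (S.level k) x i = x i :=
    fun i hi => by rw [S.hpi, if_pos (Finset.mem_Icc.1 hi)]
  have hd : Finset.Icc 1 (S.d (S.cut k)) ⊆ Finset.Icc 1 (S.d (S.level k)) :=
    Finset.Icc_subset_Icc_right (d_le_d hcut hcut_lt.le)
  have hsnd := sndIdx_mem_Icc (S := S) hk
  rw [P_apply_eq_iMap hlevel (Nat.lt_succ_self _) x (S.le_d_level_succ k),
    iMap_level_succ_apply hk (S.pi_mem_Esub _ x), hpi_of_mem _ (hd (fstIdx_mem_Icc hk)),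
    pi_congr fun i hi => hpi_of_mem i (hd hi), lp.coeFn_sub, lp.coeFn_sub, Pi.sub_apply,
    Pi.sub_apply, hpi_of_mem _ hsnd,
    P_apply_eq_iMap hcut hcut_lt x (Finset.mem_Icc.1 hsnd).2]

end Projections

section BourgainDelbaenSpace

lemma P_mem_Xsub (m : ℕ) (x : linf) : S.P m x ∈ Xsub S := by
  obtain rfl | hm := m.eq_zero_or_pos
  · simp [S.hP0]
  · exact Submodule.le_topologicalClosure _ <| Submodule.subset_span <|
      mem_biUnion (show m ∈ {m | 1 ≤ m} from hm) ⟨S.pi m x, S.pi_mem_Esub m x, P_pi hm x⟩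

lemma tendsto_P_apply {x : linf} (hx : x ∈ Xsub S) : Tendsto (fun n => S.P n x) atTop (𝓝 x) := by
  refine tendsto_apply_of_mem_topologicalClosure_span (T₀ := .id ℝ linf) S.hPnorm ?_ hx
  intro y hy
  obtain ⟨m, -, z, -, rfl⟩ := mem_iUnion₂.1 hy
  refine tendsto_const_nhds.congr' ?_
  filter_upwards [eventually_ge_atTop m] with n hn
  exact (P_P_of_ge hn z).symm

/-- The operator `I - P_m` on the Bourgain–Delbaen space. Its adjoint maps `Q e_r^*` to
`Q((I - P_m)^* e_r^*)`. -/
noncomputable def tail (m : ℕ) : Xsub S →L[ℝ] Xsub S :=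
  ((ContinuousLinearMap.id ℝ linf - S.P m).comp (Xsub S).subtypeL).codRestrict (Xsub S)
    fun x => Submodule.sub_mem _ x.2 (S.P_mem_Xsub m _)

lemma coe_tail (m : ℕ) (x : Xsub S) : (S.tail m x : linf) = x - S.P m x := rfl

lemma tail_zero : S.tail 0 = .id ℝ (Xsub S) := by
  ext x : 2
  simp [coe_tail, S.hP0]

lemma tail_comp_tail (m n : ℕ) : (S.tail m).comp (S.tail n) = S.tail (max n m) := by
  ext x : 2
  rw [ContinuousLinearMap.comp_apply, coe_tail, coe_tail, coe_tail, map_sub]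
  rcases le_total m n with h | h
  · rw [P_P_of_le h, max_eq_left h, _root_.sub_self, _root_.sub_zero]
  · rw [P_P_of_ge h, max_eq_right h, sub_sub_sub_cancel_right]

lemma norm_tail_le (m : ℕ) : ‖S.tail m‖ ≤ 1 + S.lam := by
  refine ContinuousLinearMap.opNorm_le_bound _ (by linarith [S.hlam]) fun x => ?_
  calc ‖(x : linf) - S.P m x‖ ≤ ‖(x : linf)‖ + ‖S.P m x‖ := norm_sub_le _ _
    _ ≤ ‖(x : linf)‖ + S.lam * ‖(x : linf)‖ := by
        gcongr
        exact (S.P m).le_of_opNorm_le (S.hPnorm m) _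
    _ = (1 + S.lam) * ‖x‖ := by rw [one_add_mul, Submodule.norm_coe]

lemma tendsto_tail_apply (x : Xsub S) : Tendsto (fun n => S.tail n x) atTop (𝓝 0) := by
  rw [tendsto_subtype_rng]
  simpa only [coe_tail, ZeroMemClass.coe_zero, _root_.sub_self] using
    (S.tendsto_P_apply x.2).const_sub (x : linf)

end BourgainDelbaenSpace

section CoordinateFunctionals

lemma norm_Qe_le (k : ℕ) : ‖Qe S k‖ ≤ 1 :=
  calc ‖Qe S k‖ ≤ ‖coordFn k‖ * ‖(Xsub S).subtypeL‖ := ContinuousLinearMap.opNorm_comp_le _ _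
    _ ≤ 1 := mul_le_one₀ (norm_coordFn_le k) (norm_nonneg (Xsub S).subtypeL)
        (Submodule.norm_subtypeL_le _)

lemma QMap_comp_P_mem_span (f : linf →L[ℝ] ℝ) (m : ℕ) :
    QMap S (f.comp (S.P m)) ∈ Submodule.span ℝ {g | ∃ k : ℕ, 1 ≤ k ∧ g = Qe S k} := by
  obtain rfl | hm := m.eq_zero_or_pos
  · rw [S.hP0, ContinuousLinearMap.comp_zero]
    exact Submodule.zero_mem _
  have hsum : QMap S (f.comp (S.P m)) = ∑ k ∈ Finset.Icc 1 (S.d m), f (S.P m (ek k)) • Qe S k := by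
    ext x
    change f (S.P m x) = _
    rw [← P_pi hm, pi_eq_sum]
    simp only [map_sum, map_smul, _root_.sum_apply, _root_.smul_apply,
      _root_.smul_eq_mul]
    exact Finset.sum_congr rfl fun k _ => mul_comm _ _
  rw [hsum]
  exact Submodule.sum_mem _ fun k hk => Submodule.smul_mem _ _ <| Submodule.subset_span
    ⟨k, (Finset.mem_Icc.1 hk).1, rfl⟩

lemma Qe_comp_tail_mem_span {r : ℕ} (hr : 1 ≤ r) (m : ℕ) :
    (Qe S r).comp (S.tail m) ∈ Submodule.span ℝ {g | ∃ k : ℕ, 1 ≤ k ∧ g = Qe S k} :=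
  have hQe : Qe S r ∈ {g | ∃ k : ℕ, 1 ≤ k ∧ g = Qe S k} := ⟨r, hr, rfl⟩
  Submodule.sub_mem _ (Submodule.subset_span hQe) (S.QMap_comp_P_mem_span (coordFn r) m)

lemma tendsto_Qe_apply_of_tendsto_zero {α : Type*} {l : Filter α} {y : α → Xsub S}
    (hy : Tendsto y l (𝓝 0)) (j : α → ℕ) : Tendsto (fun k => Qe S (j k) (y k)) l (𝓝 0) := by
  refine squeeze_zero_norm (fun k => ?_) (tendsto_zero_iff_norm_tendsto_zero.1 hy)
  simpa only [one_mul] using (Qe S (j k)).le_of_opNorm_le (S.norm_Qe_le (j k)) (y k)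

lemma Qe_apply_eq {k : ℕ} (hk : 2 < k) (x : Xsub S) :
    Qe S k x = S.fstCoeff k * Qe S (S.fstIdx k) x +
      S.sndCoeff k * Qe S (S.sndIdx k) (S.tail (S.cut k) x) + Qe S k (S.tail (S.level k) x) :=
  calc Qe S k x = S.P (S.level k) x k + Qe S k (S.tail (S.level k) x) :=
        (add_sub_cancel (S.P (S.level k) x k) ((x : linf) k)).symm
    _ = _ := by rw [P_level_apply hk]; rfl

end CoordinateFunctionals

section LimitFunctionals

/-- The weak* limit of the functionals `Q e_k^*` along an ultrafilter; it exists by the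
Banach–Alaoglu theorem. -/
noncomputable def limQe (U : Ultrafilter ℕ) : Xsub S →L[ℝ] ℝ :=
  (exists_tendsto_apply_of_norm_le U S.norm_Qe_le).choose

lemma norm_limQe_le (U : Ultrafilter ℕ) : ‖S.limQe U‖ ≤ 1 :=
  (exists_tendsto_apply_of_norm_le U S.norm_Qe_le).choose_spec.1

lemma tendsto_limQe (U : Ultrafilter ℕ) (x : Xsub S) :
    Tendsto (fun k => Qe S k x) U (𝓝 (S.limQe U x)) :=
  (exists_tendsto_apply_of_norm_le U S.norm_Qe_le).choose_spec.2 x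

variable {S} {U : Ultrafilter ℕ}

lemma eq_limQe {y : Xsub S →L[ℝ] ℝ} (h : ∀ x, Tendsto (fun k => Qe S k x) U (𝓝 (y x))) :
    y = S.limQe U :=
  ContinuousLinearMap.ext fun x => tendsto_nhds_unique (h x) (S.tendsto_limQe U x)

lemma limQe_pure (r : ℕ) : S.limQe (pure r) = Qe S r :=
  (eq_limQe fun x => tendsto_pure_nhds (fun k => Qe S k x) r).symm

lemma exists_eq_limQe_of_cluster {y : Xsub S →L[ℝ] ℝ}
    (h : ∀ (s : Finset (Xsub S)) (δ : ℝ), 0 < δ →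
      {k : ℕ | 1 ≤ k ∧ ∀ x ∈ s, |Qe S k x - y x| < δ}.Infinite) :
    ∃ U : Ultrafilter ℕ, (∀ᶠ k in U, 1 ≤ k) ∧ y = S.limQe U := by
  have hcluster : MapClusterPt (y : Xsub S → ℝ) atTop fun k => (Qe S k : Xsub S → ℝ) :=
    mapClusterPt_pi_of_frequently fun s δ hδ =>
      (Nat.frequently_atTop_iff_infinite.2 (h s δ hδ)).mono fun k hk => hk.2
  obtain ⟨U, hU, hlim⟩ := mapClusterPt_iff_ultrafilter.1 hcluster
  exact ⟨U, hU (eventually_ge_atTop 1), eq_limQe (tendsto_pi_nhds.1 hlim)⟩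

lemma limQe_eq_of_tendsto_cut (hU : (U : Filter ℕ) ≤ atTop) (hcut : Tendsto S.cut U atTop)
    {α : ℝ}
    (hα : Tendsto S.fstCoeff U (𝓝 α)) {β : ℝ} (hβ : Tendsto S.sndCoeff U (𝓝 β)) :
    S.limQe U = α • S.limQe (U.map S.fstIdx) := by
  refine (eq_limQe fun x => ?_).symm
  have hfst := hα.mul (S.tendsto_limQe (U.map S.fstIdx) x)
  have hsnd := hβ.mul
    (S.tendsto_Qe_apply_of_tendsto_zero ((S.tendsto_tail_apply x).comp hcut) S.sndIdx)
  have htail := S.tendsto_Qe_apply_of_tendsto_zero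
    ((S.tendsto_tail_apply x).comp (S.tendsto_level_atTop.mono_left hU)) id
  have hlim := (hfst.add hsnd).add htail
  rw [mul_zero, add_zero, add_zero] at hlim
  refine hlim.congr' ?_
  filter_upwards [hU (eventually_gt_atTop 2)] with k hk
  exact (S.Qe_apply_eq hk x).symm

lemma limQe_eq_of_eventually_cut_eq (hU : (U : Filter ℕ) ≤ atTop) {m r : ℕ}
    (hcut : ∀ᶠ k in U, S.cut k = m) (hr : ∀ᶠ k in U, S.fstIdx k = r) {α : ℝ}
    (hα : Tendsto S.fstCoeff U (𝓝 α)) {β : ℝ} (hβ : Tendsto S.sndCoeff U (𝓝 β)) :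
    S.limQe U = α • Qe S r + β • (S.limQe (U.map S.sndIdx)).comp (S.tail m) := by
  refine (eq_limQe fun x => ?_).symm
  have hsnd := hβ.mul (S.tendsto_limQe (U.map S.sndIdx) (S.tail m x))
  have htail := S.tendsto_Qe_apply_of_tendsto_zero
    ((S.tendsto_tail_apply x).comp (S.tendsto_level_atTop.mono_left hU)) id
  have hlim := ((hα.mul_const (Qe S r x)).add hsnd).add htail
  rw [add_zero] at hlim
  refine hlim.congr' ?_
  filter_upwards [hU (eventually_gt_atTop 2), hcut, hr] with k hk hkm hkr
  rw [S.Qe_apply_eq hk x, hkm, hkr]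
  rfl

variable (S) in
/-- One step of the series expansion of the limit functional along `U`: a multiple of some
`Q e_r^*` is split off, and what remains comes from the limit functional along `V`. -/
def IsExpansion (U V : Ultrafilter ℕ) (t c : ℝ) (r m : ℕ) : Prop :=
  |t| ≤ 1 ∧ |c| ≤ S.a ∧ 1 ≤ r ∧
    S.limQe U = t • Qe S r + c • (S.limQe V).comp (S.tail m)

lemma exists_isExpansion (hU : ∀ᶠ k in U, 1 ≤ k) :
    ∃ (V : Ultrafilter ℕ) (t c : ℝ) (r m : ℕ), (∀ᶠ k in V, 1 ≤ k) ∧ S.IsExpansion U V t c r m := by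
  obtain hU_top | ⟨r, rfl⟩ := U.le_cofinite_or_eq_pure
  swap
  · exact ⟨pure r, 1, 0, r, 0, hU, by simp, by simpa using S.a_pos.le, hU, by simp [limQe_pure]⟩
  rw [Nat.cofinite_eq_atTop] at hU_top
  have hlarge : ∀ᶠ k in U, 2 < k := hU_top (eventually_gt_atTop 2)
  obtain ⟨α, hα, hα_lim⟩ := exists_tendsto_of_norm_le U (f := S.fstCoeff) (C := S.a)
    (hlarge.mono fun k hk => (abs_fstCoeff hk).le)
  obtain ⟨β, hβ, hβ_lim⟩ := exists_tendsto_of_norm_le U (f := S.sndCoeff) (C := S.b)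
    (hlarge.mono fun k hk => (abs_sndCoeff hk).le)
  obtain hcut | ⟨m, hm⟩ := tendsto_atTop_or_eventually_eq_const U S.cut
  · refine ⟨U.map S.fstIdx, 0, α, 1, 0, ?_, by simp, hα, le_rfl, ?_⟩
    · exact hlarge.mono fun k hk => (Finset.mem_Icc.1 (fstIdx_mem_Icc hk)).1
    · rw [limQe_eq_of_tendsto_cut hU_top hcut hα_lim hβ_lim, tail_zero, zero_smul, zero_add,
        ContinuousLinearMap.comp_id]
  · have hfst : ∀ᶠ k in U, S.fstIdx k ∈ Finset.Icc 1 (S.d m) := by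
      filter_upwards [hlarge, hm] with k hk hkm using hkm ▸ fstIdx_mem_Icc hk
    obtain h | ⟨r, hr⟩ := tendsto_atTop_or_eventually_eq_const U S.fstIdx
    · obtain ⟨k, hk, hk'⟩ := (hfst.and (h.eventually_gt_atTop (S.d m))).exists
      exact absurd (Finset.mem_Icc.1 hk).2 hk'.not_ge
    obtain ⟨k, hk, rfl⟩ := (hfst.and hr).exists
    refine ⟨U.map S.sndIdx, α, β, S.fstIdx k, m, ?_, hα.trans S.ha.le, hβ.trans S.hba.le,
      (Finset.mem_Icc.1 hk).1, limQe_eq_of_eventually_cut_eq hU_top hm hr hα_lim hβ_lim⟩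
    exact hlarge.mono fun k hk => (Finset.mem_Icc.1 (sndIdx_mem_Icc hk)).1

lemma exists_seq_isExpansion (hU : ∀ᶠ k in U, 1 ≤ k) :
    ∃ (V : ℕ → Ultrafilter ℕ) (t c : ℕ → ℝ) (r m : ℕ → ℕ), V 0 = U ∧
      ∀ l, S.IsExpansion (V l) (V (l + 1)) (t l) (c l) (r l) (m l) := by
  have hstep : ∀ V : {V : Ultrafilter ℕ // ∀ᶠ k in V, 1 ≤ k},
      ∃ (W : {V : Ultrafilter ℕ // ∀ᶠ k in V, 1 ≤ k}) (t c : ℝ) (r m : ℕ),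
        S.IsExpansion V W t c r m := fun V =>
    let ⟨W, t, c, r, m, hW, h⟩ := exists_isExpansion V.2
    ⟨⟨W, hW⟩, t, c, r, m, h⟩
  choose next t c r m hnext using hstep
  refine ⟨fun l => next^[l] ⟨U, hU⟩, fun l => t (next^[l] ⟨U, hU⟩), fun l => c (next^[l] ⟨U, hU⟩),
    fun l => r (next^[l] ⟨U, hU⟩), fun l => m (next^[l] ⟨U, hU⟩), rfl, fun l => ?_⟩
  simp only [Function.iterate_succ_apply']
  exact hnext _

lemma norm_smul_limQe_comp_tail_le (c : ℝ) (U : Ultrafilter ℕ) (m : ℕ) :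
    ‖c • (S.limQe U).comp (S.tail m)‖ ≤ |c| * (1 + S.lam) :=
  calc ‖c • (S.limQe U).comp (S.tail m)‖ ≤ |c| * (‖S.limQe U‖ * ‖S.tail m‖) :=
        (ContinuousLinearMap.opNorm_smul_le _ _).trans
          (mul_le_mul_of_nonneg_left (ContinuousLinearMap.opNorm_comp_le _ _) (abs_nonneg c))
    _ ≤ |c| * (1 * (1 + S.lam)) := by
        gcongr
        exacts [S.norm_limQe_le U, S.norm_tail_le m]
    _ = |c| * (1 + S.lam) := by rw [one_mul]

theorem exists_series_limQe (hU : ∀ᶠ k in U, 1 ≤ k) :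
    ∃ (c : ℕ → ℝ) (ms rs : ℕ → ℕ), (∀ j, |c j| ≤ S.a ^ j) ∧ (∀ j, 1 ≤ rs j) ∧
      Summable (fun j => ‖c j • (Qe S (rs j)).comp (S.tail (ms j))‖) ∧
      HasSum (fun j => c j • (Qe S (rs j)).comp (S.tail (ms j))) (S.limQe U) := by
  obtain ⟨V, t, c, r, m, rfl, hexp⟩ := exists_seq_isExpansion (S := S) hU
  choose ht hc hr heq using hexp
  let C : ℕ → ℝ := fun l => ∏ i ∈ Finset.range l, c i
  let M : ℕ → ℕ := fun l => (Finset.range l).sup m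
  let R : ℕ → Xsub S →L[ℝ] ℝ := fun l => C l • (S.limQe (V l)).comp (S.tail (M l))
  have hC : ∀ l, |C l| ≤ S.a ^ l := fun l => by
    simpa only [C, Finset.abs_prod, Finset.prod_const, Finset.card_range] using
      Finset.prod_le_prod (s := Finset.range l) (fun i _ => abs_nonneg (c i)) fun i _ => hc i
  have hM : ∀ l, max (M l) (m l) = M (l + 1) := fun l => by
    rw [max_comm, ← Finset.sup_insert, ← Finset.range_add_one]
  have hR : ∀ l, R l - R (l + 1) = (C l * t l) • (Qe S (r l)).comp (S.tail (M l)) := fun l => by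
    simp only [R, C, Finset.prod_range_succ]
    rw [heq l, ContinuousLinearMap.add_comp, ContinuousLinearMap.smul_comp,
      ContinuousLinearMap.smul_comp, ContinuousLinearMap.comp_assoc, tail_comp_tail, hM, smul_add,
      smul_smul, smul_smul, add_sub_cancel_right]
  have hsum : Summable fun l => ‖R l‖ :=
    .of_nonneg_of_le (fun l => norm_nonneg (R l))
      (fun l => (norm_smul_limQe_comp_tail_le _ _ _).trans
        (mul_le_mul_of_nonneg_right (hC l) (by linarith [S.hlam])))
      ((summable_geometric_of_lt_one S.a_pos.le S.ha).mul_right _)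
  have hR₀ : R 0 = S.limQe (V 0) := by simp [R, C, M, tail_zero]
  have hseries := hasSum_sub_succ_of_summable_norm (R := R) hsum
  simp only [hR, hR₀] at hseries
  refine ⟨fun l => C l * t l, M, r, fun l => ?_, hr, hseries⟩
  rw [abs_mul]
  exact (mul_le_of_le_one_right (abs_nonneg _) (ht l)).trans (hC l)

end LimitFunctionals

end BDSetup

/-- from the proof of Proposition 2.1: every weak*-limit point of
`(Q e_k^*)` is the sum of an absolutely convergent series
`Σ_j c_j Q((I − P_{m_j})^* e_{r_j}^*)` with `|c_j| ≤ a^{j-1}`; in particular it lies in the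
closed linear span of `{Q e_j^*}`. -/
theorem stmt_13 (S : BDSetup) (xstar : (Xsub S) →L[ℝ] ℝ)
    (hcluster : ∀ (s : Finset (Xsub S)) (δ : ℝ), 0 < δ →
      {k : ℕ | 1 ≤ k ∧ ∀ x ∈ s, |Qe S k x - xstar x| < δ}.Infinite) :
    (∃ (c : ℕ → ℝ) (ms rs : ℕ → ℕ),
      (∀ j : ℕ, |c j| ≤ S.a ^ j) ∧ (∀ j : ℕ, 1 ≤ rs j) ∧
      Summable (fun j : ℕ =>
        ‖c j • QMap S ((coordFn (rs j)).comp (ContinuousLinearMap.id ℝ linf - S.P (ms j)))‖) ∧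
      HasSum (fun j : ℕ =>
        c j • QMap S ((coordFn (rs j)).comp (ContinuousLinearMap.id ℝ linf - S.P (ms j))))
        xstar) ∧
    xstar ∈ closure ((Submodule.span ℝ
      {f : (Xsub S) →L[ℝ] ℝ | ∃ k : ℕ, 1 ≤ k ∧ f = Qe S k} :
        Submodule ℝ ((Xsub S) →L[ℝ] ℝ)) : Set ((Xsub S) →L[ℝ] ℝ)) := by
  obtain ⟨U, hU, rfl⟩ := BDSetup.exists_eq_limQe_of_cluster hcluster
  obtain ⟨c, ms, rs, hc, hrs, hsummable, hsum⟩ := BDSetup.exists_series_limQe (S := S) hU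
  exact ⟨⟨c, ms, rs, hc, hrs, hsummable, hsum⟩,
    mem_closure_of_tendsto hsum <| Eventually.of_forall fun s => Submodule.sum_mem _ fun j _ =>
      Submodule.smul_mem _ _ (S.Qe_comp_tail_mem_span (hrs j) (ms j))⟩
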